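/- (Corollary 1, identifiability for the linear model.) Let H be a real M × n matrix such that every collection of n rows of H is linearly independent (n ≤ M). Then every outlier vector a ∈ ℝ^M with ‖a‖₀ ≤ ⌊(M − n)/2⌋ is identifiable for the linear measurement model: for every x_o ∈ ℝ^n, the only pair (x, a') ∈ ℝ^n × ℝ^M satisfying Hx + a' = Hx_o + a and ‖a'‖₀ ≤ ‖a‖₀ is (x_o, a). -/

import Mathlib

/-- The ℓ0-pseudonorm: number of nonzero entries of a vector in ℝ^M. -/
noncomputable def l0 {M : ℕ} (a : Fin M → ℝ) : ℕ :=
  (Finset.univ.filter fun i => a i ≠ 0).card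

/-!
Two explanations of the same measurement differ by `H (x - x₀) = a - a'`, a vector with at most
`2‖a‖₀` nonzero entries, so it suffices that `H v` has more nonzero entries than that for every
`v ≠ 0`. In coding terms, `H` generates a maximum distance separable code: if `H v` vanished at `n`
coordinates, then `v` would be orthogonal to `n` independent rows, hence to the whole space.
-/

open Matrix

section HammingNorm

variable {ι : Type*} {β : ι → Type*} [Fintype ι] [∀ i, DecidableEq (β i)]

theorem card_filter_eq_zero_add_hammingNorm [∀ i, Zero (β i)] (a : ∀ i, β i) :
    (Finset.univ.filter fun i => a i = 0).card + hammingNorm a = Fintype.card ι :=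
  Finset.card_filter_add_card_filter_not fun i => a i = 0

theorem hammingNorm_sub_le [∀ i, AddGroup (β i)] (a b : ∀ i, β i) :
    hammingNorm (a - b) ≤ hammingNorm a + hammingNorm b :=
  calc
    hammingNorm (a - b) = hammingDist a b := by
      simp only [hammingNorm, hammingDist, Pi.sub_apply, sub_ne_zero]
    _ ≤ hammingDist a 0 + hammingDist b 0 := hammingDist_triangle_right a b 0
    _ = hammingNorm a + hammingNorm b := by simp only [hammingDist_zero_right]

end HammingNorm

section Identifiability

variable {R ι κ : Type*} [NonUnitalNonAssocRing R] [DecidableEq R] [Fintype ι] [Fintype κ]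

/-- Identifiability of the outlier vector `a` in the measurement model `z = H x + a`: no measurement
`H x₀ + a` is explained by another pair `(x, a')` in which `a'` has at most as many nonzero entries
as `a`. The pseudonorm `‖·‖₀` is expressed by `hammingNorm`. -/
def IsIdentifiable (H : Matrix ι κ R) (a : ι → R) : Prop :=
  ∀ (x₀ x : κ → R) (a' : ι → R),
    H *ᵥ x + a' = H *ᵥ x₀ + a → hammingNorm a' ≤ hammingNorm a → x = x₀ ∧ a' = a

theorem isIdentifiable_of_two_mul_hammingNorm_lt {H : Matrix ι κ R} {a : ι → R}
    (hH : ∀ v : κ → R, v ≠ 0 → 2 * hammingNorm a < hammingNorm (H *ᵥ v)) :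
    IsIdentifiable H a := by
  intro x₀ x a' heq hle
  have mulVec_sub_eq : H *ᵥ (x - x₀) = a - a' := by
    rw [mulVec_sub, sub_eq_sub_iff_add_eq_add, heq, add_comm]
  have hx : x = x₀ := by
    by_contra hne
    have lower : 2 * hammingNorm a < hammingNorm (a - a') :=
      mulVec_sub_eq ▸ hH (x - x₀) (sub_ne_zero.mpr hne)
    have upper : hammingNorm (a - a') ≤ hammingNorm a + hammingNorm a' := hammingNorm_sub_le a a'
    lia
  subst hx
  exact ⟨rfl, add_left_cancel heq⟩

end Identifiability

theorem eq_zero_of_span_eq_top_of_dotProduct_eq_zero {R κ : Type*} [Semiring R] [Fintype κ]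
    {s : Set (κ → R)} (hs : Submodule.span R s = ⊤) {v : κ → R} (hv : ∀ u ∈ s, u ⬝ᵥ v = 0) :
    v = 0 := by
  classical
  have dotProduct_eq_zero (u : κ → R) : u ⬝ᵥ v = 0 := by
    have hu : u ∈ Submodule.span R s := hs ▸ Submodule.mem_top
    induction hu using Submodule.span_induction with
    | mem u hu => exact hv u hu
    | zero => exact zero_dotProduct v
    | add _ _ _ _ h₁ h₂ => rw [add_dotProduct, h₁, h₂, add_zero]
    | smul c _ _ h => rw [smul_dotProduct, h, smul_zero]
  funext j
  rw [← single_one_dotProduct j v, dotProduct_eq_zero, Pi.zero_apply]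

section IndependentRows

variable {K ι κ : Type*} [DivisionRing K] [Fintype ι] [Fintype κ]

theorem eq_zero_of_linearIndependent_of_dotProduct_eq_zero {w : ι → κ → K}
    (hw : LinearIndependent K w) (hcard : Fintype.card ι = Fintype.card κ) {v : κ → K}
    (hv : ∀ i, w i ⬝ᵥ v = 0) : v = 0 := by
  have span_eq_top : Submodule.span K (Set.range w) = ⊤ :=
    hw.span_eq_top_of_card_eq_finrank' (by rw [hcard, Module.finrank_fintype_fun_eq_card])
  exact eq_zero_of_span_eq_top_of_dotProduct_eq_zero span_eq_top (Set.forall_mem_range.mpr hv)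

variable [DecidableEq K] {H : Matrix ι κ K}

theorem card_lt_hammingNorm_mulVec_add_card
    (hrows : ∀ s : Finset ι, s.card = Fintype.card κ → LinearIndependent K (fun i : s => H i))
    {v : κ → K} (hv : v ≠ 0) :
    Fintype.card ι < hammingNorm (H *ᵥ v) + Fintype.card κ := by
  by_contra! hle
  have card_zeros : Fintype.card κ ≤ (Finset.univ.filter fun i => (H *ᵥ v) i = 0).card := by
    have := card_filter_eq_zero_add_hammingNorm (H *ᵥ v)
    lia
  obtain ⟨s, hs, hcard⟩ := Finset.exists_subset_card_eq card_zeros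
  have dotProduct_eq_zero (i : s) : H i ⬝ᵥ v = 0 := (Finset.mem_filter.mp (hs i.2)).2
  exact hv <| eq_zero_of_linearIndependent_of_dotProduct_eq_zero (hrows s hcard)
    (by rw [Fintype.card_coe, hcard]) dotProduct_eq_zero

theorem linear_identifiability_general
    (hrows : ∀ s : Finset ι, s.card = Fintype.card κ → LinearIndependent K (fun i : s => H i))
    {a : ι → K} (ha : 2 * hammingNorm a + Fintype.card κ ≤ Fintype.card ι) :
    IsIdentifiable H a :=
  isIdentifiable_of_two_mul_hammingNorm_lt fun _ hv =>
    lt_of_add_lt_add_right (ha.trans_lt (card_lt_hammingNorm_mulVec_add_card hrows hv))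

end IndependentRows

theorem l0_eq_hammingNorm {M : ℕ} (a : Fin M → ℝ) : l0 a = hammingNorm a := rfl

/-- Corollary 1 (identifiability for the linear model): if every collection of `n`
rows of `H` is linearly independent (`n ≤ M`), every outlier `a` with
`‖a‖₀ ≤ ⌊(M − n)/2⌋` is identifiable for `z = Hx + a`. -/
theorem linear_identifiability {M n : ℕ} (hn : 1 ≤ n) (hnM : n ≤ M)
    (H : Matrix (Fin M) (Fin n) ℝ)
    (hrows : ∀ s : Finset (Fin M), s.card = n →
      LinearIndependent ℝ (fun i : s => H i)) :
    ∀ a : Fin M → ℝ, l0 a ≤ (M - n) / 2 →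
      ∀ x₀ : Fin n → ℝ, ∀ (x : Fin n → ℝ) (a' : Fin M → ℝ),
        H.mulVec x + a' = H.mulVec x₀ + a → l0 a' ≤ l0 a → x = x₀ ∧ a' = a := by
  simp only [l0_eq_hammingNorm]
  exact fun a ha => linear_identifiability_general (by simpa only [Fintype.card_fin] using hrows)
    (by simp only [Fintype.card_fin]; lia)
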